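/- Let q be an odd prime power, n ≥ 2 an even integer, and h ∈ GL_n(F_q) with hᵗ = h or hᵗ = −h. Let π : GL_n(F_q) → PGL_n(F_q) be the canonical projection, K(h) = {g ∈ GL_n(F_q) : g·h·gᵗ = h}, S(h) = {ḡ ∈ PGL_n(F_q) : g·h·gᵗ = α·h for some α ∈ F_q^×}, S₀(h) = {ḡ ∈ S(h) : the scalar α can be taken to be a square}, and let ω : S(h) → {±1} be the unique group homomorphism with kernel S₀(h) (which exists since S₀(h) has index 2 in S(h)). Then for every complex class function χ on PGL_n(F_q): ⟨χ, Ind_{S(h)}^{PGL_n(F_q)}(1)⟩ + ⟨χ, Ind_{S(h)}^{PGL_n(F_q)}(ω)⟩ = ⟨χ∘π, Ind_{K(h)}^{GL_n(F_q)}(1)⟩. -/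

import Mathlib

/-!
By Frobenius reciprocity (`innerProd_ind`) each inner product is the average over the subgroup of `χ`
times the conjugate of the induced function. On `S(h)` the function `1 + ω` is twice the indicator
of `S₀(h)`, and `S₀(h)` has index two in `S(h)`, so the left-hand side is the average of `χ` over
`S₀(h)`. The projection maps `K(h)` onto `S₀(h)` (`map_Isom_eq_map_Sim0`), and surjective homomorphisms
preserve averages (`average_map`), so the right-hand side is this average as well.

The index is two (`relIndex_map_Sim0`) because `h` has a similitude with nonsquare factor
(`exists_GL_similitude`). For skew-symmetric `h` it is built by splitting off hyperbolic planes
(`exists_similitude_of_isAlt`). For symmetric `h` the form is diagonalised and the basis vectors are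
paired, which is possible because `n` is even; on each plane a similitude of any prescribed factor
exists because binary forms over a finite field are universal (`exists_similitude_of_isSymm`).
-/

open Matrix
/-- The subgroup of nonzero scalar matrices in `GL (Fin n) F`, i.e. `Z ≅ F^×`. -/
def scalarSub (n : ℕ) (F : Type) [Field F] : Subgroup (GL (Fin n) F) :=
  (Units.map (Matrix.scalar (Fin n)).toMonoidHom).range

instance scalarSub_normal (n : ℕ) (F : Type) [Field F] : (scalarSub n F).Normal := by
  constructor
  rintro x ⟨c, rfl⟩ g
  refine ⟨c, Units.ext ?_⟩
  have hc : (Matrix.scalar (Fin n) (c : F)) * (↑g : Matrix (Fin n) (Fin n) F)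
      = (↑g : Matrix (Fin n) (Fin n) F) * Matrix.scalar (Fin n) (c : F) :=
    Matrix.scalar_commute (c : F) (fun r => mul_comm _ r) _
  simp only [Units.coe_map, RingHom.toMonoidHom_eq_coe, MonoidHom.coe_coe, Units.val_mul]
  rw [← hc, mul_assoc, ← Units.val_mul, mul_inv_cancel, Units.val_one, mul_one]

/-- The projective general linear group `PGL_n(F) = GL_n(F)/Z`. -/
abbrev PGL (n : ℕ) (F : Type) [Field F] : Type :=
  GL (Fin n) F ⧸ scalarSub n F

/-- The canonical projection `GL_n(F) → PGL_n(F)`. -/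
def pgl (n : ℕ) (F : Type) [Field F] : GL (Fin n) F →* PGL n F :=
  QuotientGroup.mk' (scalarSub n F)

lemma GL_inv_mul_coe {n : ℕ} {F : Type} [Field F] (a : GL (Fin n) F) :
    ((a⁻¹ : GL (Fin n) F) : Matrix (Fin n) (Fin n) F) *
      ((a : GL (Fin n) F) : Matrix (Fin n) (Fin n) F) = 1 := by
  have := congrArg (Units.val) (inv_mul_cancel a)
  rwa [Units.val_mul, Units.val_one] at this

lemma GL_transpose_mul_transpose {n : ℕ} {F : Type} [Field F] (a : GL (Fin n) F) :
    ((a : GL (Fin n) F) : Matrix (Fin n) (Fin n) F)ᵀ *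
      ((a⁻¹ : GL (Fin n) F) : Matrix (Fin n) (Fin n) F)ᵀ = 1 := by
  rw [← transpose_mul, GL_inv_mul_coe, transpose_one]

/-- The similitude group of the bilinear form `h`:
`{g ∈ GL_n(F) : g·h·gᵗ = α·h for some α ∈ F^×}`. -/
def Sim {n : ℕ} {F : Type} [Field F] (h : Matrix (Fin n) (Fin n) F) :
    Subgroup (GL (Fin n) F) where
  carrier := {g | ∃ α : Fˣ,
    (↑g : Matrix (Fin n) (Fin n) F) * h * (↑g : Matrix (Fin n) (Fin n) F)ᵀ = (α : F) • h}
  one_mem' := ⟨1, by simp⟩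
  mul_mem' := by
    rintro a b ⟨α, ha⟩ ⟨β, hb⟩
    refine ⟨β * α, ?_⟩
    show (↑(a * b) : Matrix (Fin n) (Fin n) F) * h * (↑(a * b) : Matrix (Fin n) (Fin n) F)ᵀ = _
    rw [Units.val_mul, transpose_mul]
    calc (↑a : Matrix (Fin n) (Fin n) F) * ↑b * h *
          ((↑b : Matrix (Fin n) (Fin n) F)ᵀ * (↑a : Matrix (Fin n) (Fin n) F)ᵀ)
        = ↑a * ((↑b : Matrix (Fin n) (Fin n) F) * h * (↑b : Matrix (Fin n) (Fin n) F)ᵀ) *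
          (↑a : Matrix (Fin n) (Fin n) F)ᵀ := by
          simp only [mul_assoc]
      _ = (β : F) • ((↑a : Matrix (Fin n) (Fin n) F) * h * (↑a : Matrix (Fin n) (Fin n) F)ᵀ) := by
          rw [hb, mul_smul_comm, smul_mul_assoc]
      _ = (β : F) • ((α : F) • h) := by rw [ha]
      _ = ((β * α : Fˣ) : F) • h := by rw [smul_smul, Units.val_mul]
  inv_mem' := by
    rintro a ⟨α, ha⟩
    refine ⟨α⁻¹, ?_⟩
    show (↑(a⁻¹) : Matrix (Fin n) (Fin n) F) * h * (↑(a⁻¹) : Matrix (Fin n) (Fin n) F)ᵀ = _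
    have key : (α : F) • ((↑(a⁻¹) : Matrix (Fin n) (Fin n) F) * h *
        (↑(a⁻¹) : Matrix (Fin n) (Fin n) F)ᵀ) = h := by
      calc (α : F) • ((↑(a⁻¹) : Matrix (Fin n) (Fin n) F) * h *
            (↑(a⁻¹) : Matrix (Fin n) (Fin n) F)ᵀ)
          = (↑(a⁻¹) : Matrix (Fin n) (Fin n) F) * ((α : F) • h) *
            (↑(a⁻¹) : Matrix (Fin n) (Fin n) F)ᵀ := by
            rw [mul_smul_comm, smul_mul_assoc]
        _ = (↑(a⁻¹) : Matrix (Fin n) (Fin n) F) *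
            ((↑a : Matrix (Fin n) (Fin n) F) * h * (↑a : Matrix (Fin n) (Fin n) F)ᵀ) *
            (↑(a⁻¹) : Matrix (Fin n) (Fin n) F)ᵀ := by rw [ha]
        _ = ((↑(a⁻¹) : Matrix (Fin n) (Fin n) F) * ↑a) * h *
            ((↑a : Matrix (Fin n) (Fin n) F)ᵀ * (↑(a⁻¹) : Matrix (Fin n) (Fin n) F)ᵀ) := by
            simp only [mul_assoc]
        _ = h := by rw [GL_inv_mul_coe, GL_transpose_mul_transpose, one_mul, mul_one]
    calc (↑(a⁻¹) : Matrix (Fin n) (Fin n) F) * h * (↑(a⁻¹) : Matrix (Fin n) (Fin n) F)ᵀ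
        = ((α : F))⁻¹ • ((α : F) • ((↑(a⁻¹) : Matrix (Fin n) (Fin n) F) * h *
          (↑(a⁻¹) : Matrix (Fin n) (Fin n) F)ᵀ)) := by
          rw [smul_smul, inv_mul_cancel₀ (Units.ne_zero α), one_smul]
      _ = ((α⁻¹ : Fˣ) : F) • h := by rw [key, Units.val_inv_eq_inv_val]

/-- The subgroup of similitudes whose factor is a square:
`{g ∈ GL_n(F) : g·h·gᵗ = β²·h for some β ∈ F^×}`. -/
def Sim0 {n : ℕ} {F : Type} [Field F] (h : Matrix (Fin n) (Fin n) F) :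
    Subgroup (GL (Fin n) F) where
  carrier := {g | ∃ β : Fˣ,
    (↑g : Matrix (Fin n) (Fin n) F) * h * (↑g : Matrix (Fin n) (Fin n) F)ᵀ = ((β : F))^2 • h}
  one_mem' := ⟨1, by simp⟩
  mul_mem' := by
    rintro a b ⟨α, ha⟩ ⟨β, hb⟩
    refine ⟨β * α, ?_⟩
    show (↑(a * b) : Matrix (Fin n) (Fin n) F) * h * (↑(a * b) : Matrix (Fin n) (Fin n) F)ᵀ = _
    rw [Units.val_mul, transpose_mul]
    calc (↑a : Matrix (Fin n) (Fin n) F) * ↑b * h *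
          ((↑b : Matrix (Fin n) (Fin n) F)ᵀ * (↑a : Matrix (Fin n) (Fin n) F)ᵀ)
        = ↑a * ((↑b : Matrix (Fin n) (Fin n) F) * h * (↑b : Matrix (Fin n) (Fin n) F)ᵀ) *
          (↑a : Matrix (Fin n) (Fin n) F)ᵀ := by
          simp only [mul_assoc]
      _ = ((β : F))^2 • ((↑a : Matrix (Fin n) (Fin n) F) * h *
          (↑a : Matrix (Fin n) (Fin n) F)ᵀ) := by
          rw [hb, mul_smul_comm, smul_mul_assoc]
      _ = ((β : F))^2 • (((α : F))^2 • h) := by rw [ha]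
      _ = ((↑(β * α) : F))^2 • h := by rw [smul_smul, Units.val_mul, mul_pow]
  inv_mem' := by
    rintro a ⟨α, ha⟩
    refine ⟨α⁻¹, ?_⟩
    show (↑(a⁻¹) : Matrix (Fin n) (Fin n) F) * h * (↑(a⁻¹) : Matrix (Fin n) (Fin n) F)ᵀ = _
    have key : ((α : F))^2 • ((↑(a⁻¹) : Matrix (Fin n) (Fin n) F) * h *
        (↑(a⁻¹) : Matrix (Fin n) (Fin n) F)ᵀ) = h := by
      calc ((α : F))^2 • ((↑(a⁻¹) : Matrix (Fin n) (Fin n) F) * h *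
            (↑(a⁻¹) : Matrix (Fin n) (Fin n) F)ᵀ)
          = (↑(a⁻¹) : Matrix (Fin n) (Fin n) F) * (((α : F))^2 • h) *
            (↑(a⁻¹) : Matrix (Fin n) (Fin n) F)ᵀ := by
            rw [mul_smul_comm, smul_mul_assoc]
        _ = (↑(a⁻¹) : Matrix (Fin n) (Fin n) F) *
            ((↑a : Matrix (Fin n) (Fin n) F) * h * (↑a : Matrix (Fin n) (Fin n) F)ᵀ) *
            (↑(a⁻¹) : Matrix (Fin n) (Fin n) F)ᵀ := by rw [ha]
        _ = ((↑(a⁻¹) : Matrix (Fin n) (Fin n) F) * ↑a) * h *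
            ((↑a : Matrix (Fin n) (Fin n) F)ᵀ * (↑(a⁻¹) : Matrix (Fin n) (Fin n) F)ᵀ) := by
            simp only [mul_assoc]
        _ = h := by rw [GL_inv_mul_coe, GL_transpose_mul_transpose, one_mul, mul_one]
    calc (↑(a⁻¹) : Matrix (Fin n) (Fin n) F) * h * (↑(a⁻¹) : Matrix (Fin n) (Fin n) F)ᵀ
        = (((α : F))^2)⁻¹ • (((α : F))^2 • ((↑(a⁻¹) : Matrix (Fin n) (Fin n) F) * h *
          (↑(a⁻¹) : Matrix (Fin n) (Fin n) F)ᵀ)) := by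
          rw [smul_smul, inv_mul_cancel₀ (pow_ne_zero 2 (Units.ne_zero α)), one_smul]
      _ = ((↑(α⁻¹) : F))^2 • h := by
          rw [key, Units.val_inv_eq_inv_val, inv_pow]

/-- The isometry group of the bilinear form `h`: `{g ∈ GL_n(F) : g·h·gᵗ = h}`. -/
def Isom {n : ℕ} {F : Type} [Field F] (h : Matrix (Fin n) (Fin n) F) :
    Subgroup (GL (Fin n) F) where
  carrier := {g | (↑g : Matrix (Fin n) (Fin n) F) * h * (↑g : Matrix (Fin n) (Fin n) F)ᵀ = h}
  one_mem' := by simp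
  mul_mem' := by
    intro a b ha hb
    show (↑(a * b) : Matrix (Fin n) (Fin n) F) * h * (↑(a * b) : Matrix (Fin n) (Fin n) F)ᵀ = h
    rw [Units.val_mul, transpose_mul]
    calc (↑a : Matrix (Fin n) (Fin n) F) * ↑b * h *
          ((↑b : Matrix (Fin n) (Fin n) F)ᵀ * (↑a : Matrix (Fin n) (Fin n) F)ᵀ)
        = ↑a * ((↑b : Matrix (Fin n) (Fin n) F) * h * (↑b : Matrix (Fin n) (Fin n) F)ᵀ) *
          (↑a : Matrix (Fin n) (Fin n) F)ᵀ := by simp only [mul_assoc]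
      _ = h := by rw [hb, ha]
  inv_mem' := by
    intro a ha
    show (↑(a⁻¹) : Matrix (Fin n) (Fin n) F) * h * (↑(a⁻¹) : Matrix (Fin n) (Fin n) F)ᵀ = h
    replace ha : (↑a : Matrix (Fin n) (Fin n) F) * h * (↑a : Matrix (Fin n) (Fin n) F)ᵀ = h := ha
    conv_lhs => rw [← ha]
    calc (↑(a⁻¹) : Matrix (Fin n) (Fin n) F) *
          ((↑a : Matrix (Fin n) (Fin n) F) * h * (↑a : Matrix (Fin n) (Fin n) F)ᵀ) *
          (↑(a⁻¹) : Matrix (Fin n) (Fin n) F)ᵀ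
        = ((↑(a⁻¹) : Matrix (Fin n) (Fin n) F) * ↑a) * h *
          ((↑a : Matrix (Fin n) (Fin n) F)ᵀ * (↑(a⁻¹) : Matrix (Fin n) (Fin n) F)ᵀ) := by
          simp only [mul_assoc]
      _ = h := by rw [GL_inv_mul_coe, GL_transpose_mul_transpose, one_mul, mul_one]

open scoped Classical in
/-- The induced class function `(Ind_H^G φ)(x) = (1/|H|) ∑_{y ∈ G, y⁻¹xy ∈ H} φ(y⁻¹xy)`. -/
noncomputable def ind {G : Type*} [Group G] [Fintype G] (H : Subgroup G) (φ : G → ℂ) :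
    G → ℂ :=
  fun x => (Nat.card H : ℂ)⁻¹ * ∑ y : G, if y⁻¹ * x * y ∈ H then φ (y⁻¹ * x * y) else 0

/-- The inner product `⟨φ,ψ⟩ = (1/|G|) ∑_{x ∈ G} φ(x) conj(ψ(x))` of complex functions. -/
noncomputable def innerProd {G : Type*} [Group G] [Fintype G] (φ ψ : G → ℂ) : ℂ :=
  (Nat.card G : ℂ)⁻¹ * ∑ x : G, φ x * (starRingEnd ℂ) (ψ x)

noncomputable instance (n : ℕ) (F : Type) [Field F] [Fintype F] :
    Fintype (GL (Fin n) F) := Fintype.ofFinite _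

noncomputable instance (n : ℕ) (F : Type) [Field F] [Fintype F] :
    Fintype (PGL n F) := Fintype.ofFinite _

/-! ### Similitudes with prescribed factor -/

/-- Splitting off a hyperbolic plane `⟨e, f⟩` and recursing on its orthogonal complement `W`: the
endomorphism sends `e` to `α • e`, fixes `f`, and acts on `W` through the induction hypothesis. Neither
nondegeneracy nor invertibility of `G` is asked for, so that `W` is covered by the induction. -/
theorem exists_similitude_of_isAlt {F : Type} [Field F] (α : F) (d : ℕ) :
    ∀ (V : Type) [AddCommGroup V] [Module F V] [FiniteDimensional F V]
      (B : LinearMap.BilinForm F V), B.IsAlt → Module.finrank F V = d →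
      ∃ G : V →ₗ[F] V, ∀ x y, B (G x) (G y) = α * B x y := by
  induction d using Nat.strong_induction_on with
  | _ d ih =>
    intro V _ _ _ B hB hd
    by_cases hB0 : B = 0
    · exact ⟨0, by simp [hB0]⟩
    obtain ⟨e, f, hef⟩ : ∃ e f, B e f = 1 := by
      by_contra! hcon
      refine hB0 (LinearMap.ext₂ fun x y => ?_)
      by_contra hxy
      exact hcon x ((B x y)⁻¹ • y) (by simpa using inv_mul_cancel₀ hxy)
    have hfe : B f e = -1 := by rw [← hB.neg_eq e f, hef]
    let W : Submodule F V := LinearMap.ker (B e) ⊓ LinearMap.ker (B f)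
    have hW : Module.finrank F W < d := by
      rw [← hd]
      refine Submodule.finrank_lt fun htop => ?_
      have : f ∈ W := htop ▸ Submodule.mem_top
      exact one_ne_zero (hef.symm.trans this.1)
    obtain ⟨G', hG'⟩ := ih _ hW W (B.restrict W) (fun x => hB x) rfl
    let P₀ : V →ₗ[F] V :=
      LinearMap.id + (B f).smulRight e - (B e).smulRight f
    let P : V →ₗ[F] W := P₀.codRestrict W fun x => by
      constructor
      · simp [P₀, hef, hB e]
      · simp [P₀, hfe, hB f]
    have hWe : ∀ w : W, B e w = 0 := fun w => w.2.1
    have hWf : ∀ w : W, B f w = 0 := fun w => w.2.2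
    have hWe' : ∀ w : W, B w e = 0 := fun w => by rw [← hB.neg_eq, hWe, neg_zero]
    have hWf' : ∀ w : W, B w f = 0 := fun w => by rw [← hB.neg_eq, hWf, neg_zero]
    -- `x` decomposes as `P x - (B f x) e + (B e x) f`.
    refine ⟨W.subtype ∘ₗ G' ∘ₗ P + (B e).smulRight f - (α • B f).smulRight e, fun x y => ?_⟩
    have h1 : B (G' (P x)) (G' (P y)) = α * B (P x) (P y) := hG' (P x) (P y)
    have hxe : B x e = -B e x := (hB.neg_eq e x).symm
    have hxf : B x f = -B f x := (hB.neg_eq f x).symm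
    have h2 : B (P x) (P y) = B x y + B f y * B x e - B e y * B x f := by
      have e1 : B (P x : V) (P y : V) = B (x + B f x • e - B e x • f) (P y : V) := rfl
      have e2 : B x (P y : V) = B x (y + B f y • e - B e y • f) := rfl
      rw [e1]
      simp only [map_add, map_sub, map_smul, LinearMap.add_apply, LinearMap.sub_apply,
        LinearMap.smul_apply, hWe, hWf, e2, smul_eq_mul]
      rw [hxe, hxf]
      ring
    simp only [LinearMap.add_apply, LinearMap.sub_apply, LinearMap.comp_apply,
      Submodule.subtype_apply, LinearMap.smulRight_apply, LinearMap.smul_apply, map_add, map_sub,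
      map_smul, smul_eq_mul, hWe, hWf, hWe', hWf', hef, hfe, h1, h2, hB e, hB f, hxe, hxf]
    ring

theorem ringChar_ne_two_of_odd_card {F : Type} [Field F] [Fintype F]
    (hodd : Odd (Fintype.card F)) : ringChar F ≠ 2 := fun h => by
  have := FiniteField.even_card_of_char_two h
  rw [Nat.odd_iff] at hodd
  omega

/-- Nondegenerate binary quadratic forms over a finite field of odd order represent everything. -/
theorem exists_binary_rep {F : Type} [Field F] [Fintype F] (hodd : Odd (Fintype.card F))
    {a b : F} (ha : a ≠ 0) (hb : b ≠ 0) (c : F) : ∃ x y, a * x ^ 2 + b * y ^ 2 = c := by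
  open Polynomial in
  have hf : (C a * X ^ 2 : F[X]).degree = 2 := by
    simpa using degree_C_mul_X_pow 2 ha
  have hg : (C b * X ^ 2 + C 0 * X + C (-c) : F[X]).degree = 2 := degree_quadratic hb
  obtain ⟨x, y, hxy⟩ :=
    FiniteField.exists_root_sum_quadratic hf hg (Nat.odd_iff.mp hodd)
  refine ⟨x, y, ?_⟩
  simp at hxy
  linear_combination hxy

/-- Group an orthogonal basis into pairs. On a plane with diagonal form `⟨a, b⟩`, choosing
`a x² + b y² = α a`, the vectors `(x, y)` and `(-b y / a, x)` are orthogonal with values `α a` and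
`α b`. -/
theorem exists_similitude_of_isSymm {F : Type} [Field F] [Fintype F]
    (hodd : Odd (Fintype.card F)) (α : F) (V : Type) [AddCommGroup V] [Module F V]
    [FiniteDimensional F V] (heven : Even (Module.finrank F V))
    (B : LinearMap.BilinForm F V) (hB : LinearMap.IsSymm B) (hnd : B.Nondegenerate) :
    ∃ G : V →ₗ[F] V, ∀ x y, B (G x) (G y) = α * B x y := by
  have h2 : (2 : F) ≠ 0 := Ring.two_ne_zero (ringChar_ne_two_of_odd_card hodd)
  let _ : Invertible (2 : F) := invertibleOfNonzero h2
  obtain ⟨v, hv⟩ := LinearMap.BilinForm.exists_orthogonal_basis hB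
  have hvne : ∀ i, B (v i) (v i) ≠ 0 := fun i =>
    LinearMap.IsOrthoᵢ.not_isOrtho_basis_self_of_separatingLeft hv hnd.1 i
  obtain ⟨m, hm⟩ := heven
  let b : Module.Basis (Fin m ⊕ Fin m) F V :=
    v.reindex ((finCongr hm).trans finSumFinEquiv.symm)
  have hb : ∀ i j, i ≠ j → B (b i) (b j) = 0 := fun i j hij => by
    simp only [b, Module.Basis.reindex_apply]
    exact hv (fun h => hij (Equiv.injective _ h))
  have hbne : ∀ i, B (b i) (b i) ≠ 0 := fun i => by
    simpa only [b, Module.Basis.reindex_apply] using hvne _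
  choose x y hxy using fun i : Fin m =>
    exists_binary_rep hodd (hbne (.inl i)) (hbne (.inr i)) (α * B (b (.inl i)) (b (.inl i)))
  let G : V →ₗ[F] V := b.constr F (Sum.elim
    (fun i => x i • b (.inl i) + y i • b (.inr i))
    (fun i => (-(B (b (.inr i)) (b (.inr i)) * y i) / B (b (.inl i)) (b (.inl i))) • b (.inl i)
      + x i • b (.inr i)))
  have hGl : ∀ i, G (b (.inl i)) = x i • b (.inl i) + y i • b (.inr i) := fun i => by
    simp [G]
  have hGr : ∀ i, G (b (.inr i)) =
      (-(B (b (.inr i)) (b (.inr i)) * y i) / B (b (.inl i)) (b (.inl i))) • b (.inl i)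
      + x i • b (.inr i) := fun i => by
    simp [G]
  have key : B.compl₁₂ G G = α • B := by
    refine LinearMap.ext_basis b b fun i j => ?_
    rcases i with i | i <;> rcases j with j | j <;>
    · simp only [LinearMap.compl₁₂_apply, LinearMap.smul_apply, hGl, hGr, map_add, map_smul,
        LinearMap.add_apply, smul_eq_mul]
      rw [hb (.inl i) (.inr j) (by simp), hb (.inr i) (.inl j) (by simp)]
      by_cases hij : i = j
      · subst hij
        have := hbne (.inl i)
        have hx := hxy i
        field_simp
        first
          | ring1
          | linear_combination hx
          | linear_combination B (b (.inr i)) (b (.inr i)) * hx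
      · rw [hb (.inl i) (.inl j) (by simpa using hij), hb (.inr i) (.inr j) (by simpa using hij)]
        simp
  exact ⟨G, fun x y => by simpa using LinearMap.congr_fun₂ key x y⟩

/-- Every nonzero scalar is the factor of some similitude of `h`. -/
theorem exists_GL_similitude {F : Type} [Field F] [Fintype F]
    (hodd : Odd (Fintype.card F)) {n : ℕ} (hneven : Even n) (h : GL (Fin n) F)
    (hsymm : (↑h : Matrix (Fin n) (Fin n) F)ᵀ = (↑h : Matrix (Fin n) (Fin n) F) ∨
             (↑h : Matrix (Fin n) (Fin n) F)ᵀ = -(↑h : Matrix (Fin n) (Fin n) F)) (α : Fˣ) :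
    ∃ g : GL (Fin n) F, (g : Matrix (Fin n) (Fin n) F) * h * (g : Matrix (Fin n) (Fin n) F)ᵀ
      = (α : F) • (h : Matrix (Fin n) (Fin n) F) := by
  have h2 : (2 : F) ≠ 0 := Ring.two_ne_zero (ringChar_ne_two_of_odd_card hodd)
  have hdet : (h : Matrix (Fin n) (Fin n) F).det ≠ 0 :=
    ((Matrix.isUnit_iff_isUnit_det _).mp h.isUnit).ne_zero
  set M : Matrix (Fin n) (Fin n) F := h.val with hM
  let B : LinearMap.BilinForm F (Fin n → F) := Matrix.toLinearMap₂' F M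
  have hflip : ∀ x y, B y x = x ⬝ᵥ (Mᵀ *ᵥ y) := fun x y => by
    simp only [B, Matrix.toLinearMap₂'_apply']
    rw [Matrix.mulVec_transpose, dotProduct_comm x, Matrix.dotProduct_mulVec]
  obtain ⟨G, hG⟩ : ∃ G : (Fin n → F) →ₗ[F] (Fin n → F),
      ∀ x y, B (G x) (G y) = (α : F) * B x y := by
    rcases hsymm with hs | hs
    · refine exists_similitude_of_isSymm hodd _ _ (by simpa using hneven) B ⟨fun x y => ?_⟩ ?_
      · rw [hflip y x, hs]
        simp [B, Matrix.toLinearMap₂'_apply']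
      · exact (Matrix.nondegenerate_of_det_ne_zero hdet).toLinearMap₂'
    · refine exists_similitude_of_isAlt _ _ _ B (fun x => ?_) rfl
      have h1 : B x x = -B x x := by
        conv_lhs => rw [hflip x x, hs]
        simp [B, Matrix.toLinearMap₂'_apply', Matrix.neg_mulVec]
      have : (2 : F) * B x x = 0 := by linear_combination h1
      exact (mul_eq_zero.mp this).resolve_left h2
  have hmat : (LinearMap.toMatrix' G)ᵀ * M * LinearMap.toMatrix' G = (α : F) • M := by
    have : B.compl₁₂ G G = (α : F) • B := LinearMap.ext₂ fun x y => by simpa using hG x y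
    have := congrArg (LinearMap.toMatrix₂' F) this
    rw [LinearMap.toMatrix₂'_compl₁₂, map_smul] at this
    simpa [B] using this
  have hGdet : IsUnit (LinearMap.toMatrix' G)ᵀ.det := by
    have := congrArg Matrix.det hmat
    rw [Matrix.det_mul, Matrix.det_mul, Matrix.det_smul] at this
    refine isUnit_iff_ne_zero.mpr fun h0 => ?_
    rw [h0] at this
    simp [hdet] at this
  exact ⟨Matrix.nonsingInvUnit _ hGdet, hmat⟩

/-! ### Averages over finite groups -/

/-- A surjective homomorphism of finite groups preserves averages: both sides come from the double
sum of `ψ (f a * b)`. -/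
theorem average_comp_of_surjective {A B : Type*} [Group A] [Group B] [Fintype A] [Fintype B]
    (f : A →* B) (hf : Function.Surjective f) (ψ : B → ℂ) :
    (Nat.card A : ℂ)⁻¹ * ∑ a, ψ (f a) = (Nat.card B : ℂ)⁻¹ * ∑ b, ψ b := by
  have h1 : ∑ a : A, ∑ b : B, ψ (f a * b) = Nat.card A * ∑ b, ψ b := by
    have : ∀ a : A, ∑ b : B, ψ (f a * b) = ∑ b, ψ b := fun a =>
      Equiv.sum_comp (Equiv.mulLeft (f a)) ψ
    simp [this]
  have h2 : ∑ a : A, ∑ b : B, ψ (f a * b) = Nat.card B * ∑ a, ψ (f a) := by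
    rw [Finset.sum_comm]
    have : ∀ b : B, ∑ a : A, ψ (f a * b) = ∑ a, ψ (f a) := fun b => by
      obtain ⟨c, rfl⟩ := hf b
      simpa using Equiv.sum_comp (Equiv.mulRight c) (fun a => ψ (f a))
    simp [this]
  have hA : (Nat.card A : ℂ) ≠ 0 := Nat.cast_ne_zero.mpr Nat.card_pos.ne'
  have hB : (Nat.card B : ℂ) ≠ 0 := Nat.cast_ne_zero.mpr Nat.card_pos.ne'
  field_simp
  linear_combination h2.symm.trans h1

open scoped Classical in
/-- The same averaging principle for the image of a subgroup, with sums over the ambient groups. -/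
theorem average_map {G Q : Type*} [Group G] [Group Q] [Fintype G] [Fintype Q]
    (f : G →* Q) (K : Subgroup G) (ψ : Q → ℂ) :
    (Nat.card K : ℂ)⁻¹ * ∑ g : G, (if g ∈ K then ψ (f g) else 0) =
      (Nat.card (K.map f) : ℂ)⁻¹ * ∑ x : Q, if x ∈ K.map f then ψ x else 0 := by
  have h1 : ∑ g : G, (if g ∈ K then ψ (f g) else 0) = ∑ g : K, ψ (f g) := by
    rw [← Finset.sum_filter]
    exact Finset.sum_subtype _ (by simp) _
  have h2 : ∑ x : Q, (if x ∈ K.map f then ψ x else 0) = ∑ x : K.map f, ψ x := by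
    rw [← Finset.sum_filter]
    exact Finset.sum_subtype _ (by simp) _
  rw [h1, h2]
  exact average_comp_of_surjective (f.subgroupMap K) (f.subgroupMap_surjective K) (fun x => ψ x)

open scoped Classical in
/-- Frobenius reciprocity for class functions `χ`. -/
theorem innerProd_ind {G : Type*} [Group G] [Fintype G] (H : Subgroup G) (φ χ : G → ℂ)
    (hχ : ∀ x y : G, χ (y * x * y⁻¹) = χ x) :
    innerProd χ (ind H φ) =
      (Nat.card H : ℂ)⁻¹ * ∑ x : G, if x ∈ H then χ x * (starRingEnd ℂ) (φ x) else 0 := by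
  have hG : (Nat.card G : ℂ) ≠ 0 := Nat.cast_ne_zero.mpr Nat.card_pos.ne'
  have inner : ∀ y : G, ∑ x : G, χ x * (starRingEnd ℂ)
        (if y⁻¹ * x * y ∈ H then φ (y⁻¹ * x * y) else 0) =
      ∑ x : G, if x ∈ H then χ x * (starRingEnd ℂ) (φ x) else 0 := fun y => by
    rw [← Equiv.sum_comp (MulAut.conj y).toEquiv]
    refine Finset.sum_congr rfl fun x _ => ?_
    have hx : y⁻¹ * (y * x * y⁻¹) * y = x := by group
    simp only [MulEquiv.toEquiv_eq_coe, MulEquiv.coe_toEquiv, MulAut.conj_apply, hx, hχ]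
    split_ifs <;> simp
  have total : ∑ x : G, χ x * (starRingEnd ℂ) (ind H φ x) =
      (Nat.card H : ℂ)⁻¹ * (Nat.card G *
        ∑ x : G, if x ∈ H then χ x * (starRingEnd ℂ) (φ x) else 0) := by
    calc ∑ x : G, χ x * (starRingEnd ℂ) (ind H φ x)
        = (Nat.card H : ℂ)⁻¹ * ∑ x : G, ∑ y : G, χ x * (starRingEnd ℂ)
            (if y⁻¹ * x * y ∈ H then φ (y⁻¹ * x * y) else 0) := by
          rw [Finset.mul_sum]
          refine Finset.sum_congr rfl fun x _ => ?_
          rw [← Finset.mul_sum, ← map_sum]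
          simp only [ind, map_mul, map_inv₀, map_natCast]
          ring
      _ = _ := by
          rw [Finset.sum_comm]
          simp only [inner]
          simp
  rw [innerProd, total]
  field_simp

/-! ### The groups `S₀(h)`, `S(h)` and the image of `K(h)` -/

theorem Sim0_le_Sim {n : ℕ} {F : Type} [Field F] (h : Matrix (Fin n) (Fin n) F) :
    Sim0 h ≤ Sim h := fun _ ⟨β, hβ⟩ => ⟨β ^ 2, by simpa using hβ⟩

/-- Scalar matrices have square factor, so `Sim0 h` is saturated under `pgl`. -/
theorem scalarSub_le_Sim0 {n : ℕ} {F : Type} [Field F] (h : Matrix (Fin n) (Fin n) F) :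
    scalarSub n F ≤ Sim0 h := by
  rintro _ ⟨c, rfl⟩
  refine ⟨c, ?_⟩
  simp [Matrix.scalar_apply, ← Matrix.smul_one_eq_diagonal, smul_smul, sq]

theorem pgl_mem_map_Sim0 {n : ℕ} {F : Type} [Field F] (h : Matrix (Fin n) (Fin n) F)
    (g : GL (Fin n) F) : pgl n F g ∈ (Sim0 h).map (pgl n F) ↔ g ∈ Sim0 h := by
  refine ⟨?_, fun hg => Subgroup.mem_map_of_mem _ hg⟩
  rintro ⟨k, hk, hkg⟩
  have h1 : k⁻¹ * g ∈ scalarSub n F := QuotientGroup.eq.mp hkg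
  simpa using (Sim0 h).mul_mem hk (scalarSub_le_Sim0 h h1)

/-- Dividing a similitude of factor `β²` by the scalar `β` gives an isometry. -/
theorem map_Isom_eq_map_Sim0 {n : ℕ} {F : Type} [Field F] (h : Matrix (Fin n) (Fin n) F) :
    (Isom h).map (pgl n F) = (Sim0 h).map (pgl n F) := by
  apply le_antisymm
  · refine Subgroup.map_mono fun g hg => ⟨1, ?_⟩
    simpa using (show (g : Matrix (Fin n) (Fin n) F) * h * (g : Matrix (Fin n) (Fin n) F)ᵀ = h
      from hg)
  · rintro _ ⟨g, ⟨β, hg⟩, rfl⟩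
    let z : GL (Fin n) F := Units.map (Matrix.scalar (Fin n)).toMonoidHom β⁻¹
    refine ⟨g * z, ?_, ?_⟩
    · change ((g * z : GL (Fin n) F) : Matrix (Fin n) (Fin n) F) * h *
        ((g * z : GL (Fin n) F) : Matrix (Fin n) (Fin n) F)ᵀ = h
      have hz : (z : Matrix (Fin n) (Fin n) F) = (β : F)⁻¹ • 1 := by
        simp [z, Matrix.scalar_apply, ← Matrix.smul_one_eq_diagonal]
      have hβ : (β : F) ≠ 0 := β.ne_zero
      rw [Units.val_mul, hz]
      simp only [mul_smul_comm, mul_one, Matrix.transpose_smul, smul_mul_assoc, hg, smul_smul]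
      have : (β : F)⁻¹ * ((β : F)⁻¹ * (β : F) ^ 2) = 1 := by field_simp
      rw [this, one_smul]
    · have hz : pgl n F z = 1 := (QuotientGroup.eq_one_iff z).mpr ⟨β⁻¹, rfl⟩
      rw [map_mul, hz, mul_one]

/-- Since `h ≠ 0`, the factor of a similitude is unique, so it decides membership in `Sim0 h`. -/
theorem mem_Sim0_iff_isSquare {n : ℕ} {F : Type} [Field F] {h : Matrix (Fin n) (Fin n) F}
    (h0 : h ≠ 0) {g : GL (Fin n) F} {α : Fˣ}
    (hg : (g : Matrix (Fin n) (Fin n) F) * h * (g : Matrix (Fin n) (Fin n) F)ᵀ = (α : F) • h) :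
    g ∈ Sim0 h ↔ IsSquare (α : F) := by
  constructor
  · rintro ⟨β, hβ⟩
    have : (α : F) = (β : F) ^ 2 := smul_left_injective F h0 (hg.symm.trans hβ)
    exact ⟨β, by rw [this, sq]⟩
  · rintro ⟨β, hβ⟩
    have hβ0 : β ≠ 0 := fun h => α.ne_zero (by rw [hβ, h, mul_zero])
    exact ⟨Units.mk0 β hβ0, by rw [hg, hβ, Units.val_mk0, sq]⟩

theorem relIndex_map_Sim0 {F : Type} [Field F] [Fintype F]
    (hodd : Odd (Fintype.card F)) {n : ℕ} (hn2 : 2 ≤ n) (hneven : Even n) (h : GL (Fin n) F)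
    (hsymm : (↑h : Matrix (Fin n) (Fin n) F)ᵀ = (↑h : Matrix (Fin n) (Fin n) F) ∨
             (↑h : Matrix (Fin n) (Fin n) F)ᵀ = -(↑h : Matrix (Fin n) (Fin n) F)) :
    ((Sim0 (h : Matrix (Fin n) (Fin n) F)).map (pgl n F)).relIndex
      ((Sim (h : Matrix (Fin n) (Fin n) F)).map (pgl n F)) = 2 := by
  have : NeZero n := ⟨by omega⟩
  have h0 : (h : Matrix (Fin n) (Fin n) F) ≠ 0 := h.ne_zero
  obtain ⟨a, ha⟩ := FiniteField.exists_nonsquare (ringChar_ne_two_of_odd_card hodd)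
  have ha0 : a ≠ 0 := fun h => ha (h ▸ IsSquare.zero)
  obtain ⟨g, hg⟩ := exists_GL_similitude hodd hneven h hsymm (Units.mk0 a ha0)
  rw [Subgroup.relIndex_eq_two_iff]
  refine ⟨pgl n F g, Subgroup.mem_map_of_mem _ ⟨_, hg⟩, ?_⟩
  rintro _ ⟨k, ⟨β, hk⟩, rfl⟩
  have hkg : ((k * g : GL (Fin n) F) : Matrix (Fin n) (Fin n) F) * h *
      ((k * g : GL (Fin n) F) : Matrix (Fin n) (Fin n) F)ᵀ =
      ((Units.mk0 a ha0 * β : Fˣ) : F) • (h : Matrix (Fin n) (Fin n) F) := by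
    rw [Units.val_mul, Matrix.transpose_mul]
    calc (k : Matrix (Fin n) (Fin n) F) * g * h *
          ((g : Matrix (Fin n) (Fin n) F)ᵀ * (k : Matrix (Fin n) (Fin n) F)ᵀ)
        = k * ((g : Matrix (Fin n) (Fin n) F) * h * (g : Matrix (Fin n) (Fin n) F)ᵀ) *
          (k : Matrix (Fin n) (Fin n) F)ᵀ := by simp only [mul_assoc]
      _ = _ := by rw [hg, mul_smul_comm, smul_mul_assoc, hk, smul_smul, Units.val_mul]
  rw [← map_mul, pgl_mem_map_Sim0, pgl_mem_map_Sim0, mem_Sim0_iff_isSquare h0 hkg,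
    mem_Sim0_iff_isSquare h0 hk, Units.val_mul, Units.val_mk0, xor_iff_iff_not]
  -- For nonsquare `a`, exactly one of `a * β` and `β` is a square, by the quadratic character.
  classical
  have hβ : (β : F) ≠ 0 := β.ne_zero
  have hca : quadraticChar F a = -1 := quadraticChar_neg_one_iff_not_isSquare.mpr ha
  rw [← quadraticChar_neg_one_iff_not_isSquare,
    ← quadraticChar_one_iff_isSquare (mul_ne_zero ha0 hβ), map_mul, hca]
  constructor <;> intro h <;> omega

/-- Let `q` be an odd prime power, `n ≥ 2` even, `h ∈ GL_n(F_q)` with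
`hᵗ = ±h`.  With `K(h)` the isometry group in `GL_n(F_q)`, `S(h)` (resp. `S₀(h)`) the
similitude stabilizer (resp. square-factor similitudes) in `PGL_n(F_q)`, and
`ω : S(h) → {±1}` the unique homomorphism with kernel `S₀(h)` (pinned down by the value
conditions `hω`), for every complex class function `χ` on `PGL_n(F_q)`:
`⟨χ, Ind_{S(h)}(1)⟩ + ⟨χ, Ind_{S(h)}(ω)⟩ = ⟨χ∘π, Ind_{K(h)}(1)⟩`. -/
theorem induced_one_add_induced_omega
    (F : Type) [Field F] [Fintype F] (hodd : Odd (Fintype.card F))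
    (n : ℕ) (hn2 : 2 ≤ n) (hneven : Even n) (h : GL (Fin n) F)
    (hsymm : (↑h : Matrix (Fin n) (Fin n) F)ᵀ = (↑h : Matrix (Fin n) (Fin n) F) ∨
             (↑h : Matrix (Fin n) (Fin n) F)ᵀ = -(↑h : Matrix (Fin n) (Fin n) F))
    (ω : PGL n F → ℂ)
    (hω : ∀ x ∈ (Sim (↑h : Matrix (Fin n) (Fin n) F)).map (pgl n F),
      (x ∈ (Sim0 (↑h : Matrix (Fin n) (Fin n) F)).map (pgl n F) → ω x = 1) ∧
      (x ∉ (Sim0 (↑h : Matrix (Fin n) (Fin n) F)).map (pgl n F) → ω x = -1))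
    (χ : PGL n F → ℂ) (hχ : ∀ x y : PGL n F, χ (y * x * y⁻¹) = χ x) :
    innerProd χ (ind ((Sim (↑h : Matrix (Fin n) (Fin n) F)).map (pgl n F)) (fun _ => 1)) +
      innerProd χ (ind ((Sim (↑h : Matrix (Fin n) (Fin n) F)).map (pgl n F)) ω) =
    innerProd (χ ∘ (pgl n F)) (ind (Isom (↑h : Matrix (Fin n) (Fin n) F)) (fun _ => 1)) := by
  classical
  set S := (Sim (↑h : Matrix (Fin n) (Fin n) F)).map (pgl n F) with hS
  set S₀ := (Sim0 (↑h : Matrix (Fin n) (Fin n) F)).map (pgl n F) with hS₀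
  have hle : S₀ ≤ S := Subgroup.map_mono (Sim0_le_Sim _)
  have hcard : (Nat.card S : ℂ) = Nat.card S₀ * 2 := by
    have h1 := Subgroup.relIndex_mul_relIndex ⊥ S₀ S bot_le hle
    rw [Subgroup.relIndex_bot_left, Subgroup.relIndex_bot_left,
      relIndex_map_Sim0 hodd hn2 hneven h hsymm] at h1
    exact_mod_cast h1.symm
  have hχ' : ∀ x y : GL (Fin n) F, (χ ∘ pgl n F) (y * x * y⁻¹) = (χ ∘ pgl n F) x := fun x y => by
    simp only [Function.comp_apply, map_mul, map_inv, hχ]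
  rw [innerProd_ind _ _ _ hχ, innerProd_ind _ _ _ hχ, innerProd_ind _ _ _ hχ']
  simp only [map_one, mul_one, Function.comp_apply]
  rw [average_map (pgl n F) (Isom (↑h : Matrix (Fin n) (Fin n) F)) χ, map_Isom_eq_map_Sim0,
    ← hS₀, ← mul_add, ← Finset.sum_add_distrib]
  -- On `S`, the function `1 + conj ω` is twice the indicator of `S₀`.
  have hsum : ∀ x : PGL n F, ((if x ∈ S then χ x else 0) +
      if x ∈ S then χ x * (starRingEnd ℂ) (ω x) else 0) = 2 * if x ∈ S₀ then χ x else 0 := by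
    intro x
    by_cases hx : x ∈ S
    · by_cases hx0 : x ∈ S₀
      · simp only [hx, hx0, if_true, (hω x hx).1 hx0, map_one]
        ring
      · simp only [hx, hx0, if_true, if_false, (hω x hx).2 hx0, map_neg, map_one]
        ring
    · have hx0 : x ∉ S₀ := fun h => hx (hle h)
      simp [hx, hx0]
  rw [Finset.sum_congr rfl fun x _ => hsum x, ← Finset.mul_sum, hcard, mul_inv]
  ring
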